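/- Let x, y be probability vectors of dimension d, sorted in nonincreasing order, with strictly positive entries, and let γ be a probability vector of dimension m, sorted in nonincreasing order, with strictly positive entries. If x⊗γ ≺ y⊗γ, then m·γ_{m−1} ≤ P(x → y), where γ_{m−1} is the smallest entry of γ. -/

import Mathlib

/-- The sum of the `k` largest entries of a vector (equivalently, for vectors with
nonnegative entries, the maximum of `∑ i ∈ s, x i` over subsets `s` of cardinality at
most `k`; this also accounts for padding with zeros). -/
noncomputable def topSum {ι : Type*} [Fintype ι] [DecidableEq ι] (x : ι → ℝ) (k : ℕ) : ℝ :=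
  ((Finset.univ : Finset ι).powerset.filter (fun s => s.card ≤ k)).sup'
    ⟨∅, by simp⟩ (fun s => ∑ i ∈ s, x i)

/-- A probability vector: nonnegative entries summing to 1. -/
def IsProbVec {ι : Type*} [Fintype ι] (x : ι → ℝ) : Prop :=
  (∀ i, 0 ≤ x i) ∧ ∑ i, x i = 1

/-- `x ≺ y` (majorization, after padding with zeros to a common dimension): every partial
sum of the `k` largest entries of `x` is at most that of `y`, with equal total sums. -/
def PMaj {ι κ : Type*} [Fintype ι] [DecidableEq ι] [Fintype κ] [DecidableEq κ]
    (x : ι → ℝ) (y : κ → ℝ) : Prop :=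
  (∀ k : ℕ, topSum x k ≤ topSum y k) ∧ (∑ i, x i = ∑ j, y j)

/-- Tensor product of two vectors: `(x ⊗ y)_{(i,j)} = x_i y_j`. -/
def pvTensor {ι κ : Type*} (x : ι → ℝ) (y : κ → ℝ) : ι × κ → ℝ :=
  fun p => x p.1 * y p.2

/-- The optimal conversion probability
`P(v → w) = min_{0 ≤ n ≤ D-1} (∑_{i=n}^{D-1} v↓_i) / (∑_{i=n}^{D-1} w↓_i)`,
where the tail sum of the `D - n` smallest entries is the total sum minus the sum of the
`n` largest entries. -/
noncomputable def Pconv {ι : Type*} [Fintype ι] [DecidableEq ι] [Nonempty ι]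
    (v w : ι → ℝ) : ℝ :=
  (Finset.range (Fintype.card ι)).inf' (Finset.nonempty_range_iff.mpr Fintype.card_ne_zero)
    (fun n => (∑ i, v i - topSum v n) / (∑ i, w i - topSum w n))

open Finset in
/-- The supremum defining `topSum` bounds every admissible subset sum. -/
lemma sum_le_topSum {ι : Type*} [Fintype ι] [DecidableEq ι] (x : ι → ℝ) {k : ℕ}
    {s : Finset ι} (hs : s.card ≤ k) : ∑ i ∈ s, x i ≤ topSum x k :=
  le_sup' (fun s => ∑ i ∈ s, x i) (by simpa using hs)

open Finset in
/-- The supremum defining `topSum` is attained. -/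
lemma exists_topSum_eq {ι : Type*} [Fintype ι] [DecidableEq ι] (x : ι → ℝ) (k : ℕ) :
    ∃ s : Finset ι, s.card ≤ k ∧ topSum x k = ∑ i ∈ s, x i := by
  obtain ⟨s, hs, h⟩ := exists_mem_eq_sup'
    (s := (univ : Finset ι).powerset.filter (fun s => s.card ≤ k))
    ⟨∅, by simp⟩ (fun s => ∑ i ∈ s, x i)
  exact ⟨s, (mem_filter.mp hs).2, h⟩

/-- A set containing every index where `f` is positive and none where it is negative
maximizes the subset sums of `f`. -/
lemma Finset.sum_le_sum_of_sign {ι : Type*} [DecidableEq ι] {f : ι → ℝ} (s A : Finset ι)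
    (hA : ∀ i ∈ A, 0 ≤ f i) (hA' : ∀ i ∉ A, f i ≤ 0) : ∑ i ∈ s, f i ≤ ∑ i ∈ A, f i := by
  rw [← sum_inter_add_sum_sdiff s A f]
  have h₁ : ∑ i ∈ s \ A, f i ≤ 0 := sum_nonpos fun i hi => hA' i (mem_sdiff.mp hi).2
  have h₂ : ∑ i ∈ s ∩ A, f i ≤ ∑ i ∈ A, f i :=
    sum_le_sum_of_subset_of_nonneg inter_subset_right fun i hi _ => hA i hi
  linarith

open Finset in
/-- Tensoring with a vector of total mass one can only increase the (rescaled) top sums. -/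
lemma topSum_le_topSum_pvTensor {ι κ : Type*} [Fintype ι] [DecidableEq ι] [Fintype κ]
    [DecidableEq κ] (x : ι → ℝ) {c : κ → ℝ} (hc : ∑ j, c j = 1) (n : ℕ) :
    topSum x n ≤ topSum (pvTensor x c) (n * Fintype.card κ) := by
  obtain ⟨s, hs, h⟩ := exists_topSum_eq x n
  calc topSum x n = ∑ p ∈ s ×ˢ (univ : Finset κ), pvTensor x c p := by
        simp [h, sum_product, pvTensor, ← mul_sum, hc]
    _ ≤ _ := sum_le_topSum _ (by
        rw [card_product, card_univ]
        exact Nat.mul_le_mul_right _ hs)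

open Finset in
/-- Repeating each entry of a sorted nonnegative vector `|κ|` times multiplies the sum of the
largest entries by at most `|κ|`. -/
lemma sum_fst_le_card_mul_topSum {d : ℕ} {κ : Type*} [Fintype κ] [DecidableEq κ]
    {y : Fin d → ℝ} (hy : Antitone y) (hy₀ : ∀ i, 0 ≤ y i) {n : ℕ} (hn : n < d)
    {s : Finset (Fin d × κ)} (hs : s.card ≤ n * Fintype.card κ) :
    ∑ p ∈ s, y p.1 ≤ Fintype.card κ * topSum y n := by
  set a : Fin d := ⟨n, hn⟩
  have hcard : (Iio a ×ˢ (univ : Finset κ)).card = n * Fintype.card κ := by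
    simp [a]
  have key := sum_le_sum_of_sign (f := fun p : Fin d × κ => y p.1 - y a) s (Iio a ×ˢ univ)
    (fun p hp => sub_nonneg.mpr (hy (by simpa using (mem_Iio.mp (mem_product.mp hp).1).le)))
    (fun p hp => sub_nonpos.mpr (hy (by simpa using hp)))
  simp only [sum_sub_distrib, sum_const, nsmul_eq_mul, hcard] at key
  have hs' : (s.card : ℝ) * y a ≤ ((n * Fintype.card κ : ℕ) : ℝ) * y a :=
    mul_le_mul_of_nonneg_right (by exact_mod_cast hs) (hy₀ a)
  have hprod : ∑ p ∈ Iio a ×ˢ (univ : Finset κ), y p.1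
      = Fintype.card κ * ∑ i ∈ Iio a, y i := by
    simp [sum_product, mul_sum]
  have htop : (Fintype.card κ : ℝ) * ∑ i ∈ Iio a, y i ≤ Fintype.card κ * topSum y n :=
    mul_le_mul_of_nonneg_left (sum_le_topSum y (by simp [a])) (Nat.cast_nonneg _)
  linarith

open Finset in
/-- If every entry of `c` is at least `g`, the tail sums of `y ⊗ c` are at least `|κ| g` times
those of `y`. -/
lemma card_mul_tail_le_tail_pvTensor {d : ℕ} {κ : Type*} [Fintype κ] [DecidableEq κ]
    {y : Fin d → ℝ} (hy : Antitone y) (hy₀ : ∀ i, 0 ≤ y i) {c : κ → ℝ} {g : ℝ} (hg : 0 ≤ g)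
    (hc : ∀ j, g ≤ c j) {n : ℕ} (hn : n < d) :
    Fintype.card κ * g * (∑ i, y i - topSum y n)
      ≤ ∑ p, pvTensor y c p - topSum (pvTensor y c) (n * Fintype.card κ) := by
  obtain ⟨s, hs, h⟩ := exists_topSum_eq (pvTensor y c) (n * Fintype.card κ)
  have hfst : ∑ p : Fin d × κ, y p.1 = Fintype.card κ * ∑ i, y i := by
    simp [Fintype.sum_prod_type, mul_sum]
  calc Fintype.card κ * g * (∑ i, y i - topSum y n)
      = g * (∑ p : Fin d × κ, y p.1 - Fintype.card κ * topSum y n) := by rw [hfst]; ring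
    _ ≤ g * (∑ p : Fin d × κ, y p.1 - ∑ p ∈ s, y p.1) := by
        have := sum_fst_le_card_mul_topSum hy hy₀ hn hs
        gcongr
    _ = ∑ p ∈ sᶜ, g * y p.1 := by
        rw [← mul_sum, ← sum_compl_add_sum s, add_sub_cancel_right]
    _ ≤ ∑ p ∈ sᶜ, pvTensor y c p := sum_le_sum fun p _ => by
        rw [pvTensor, mul_comm]
        exact mul_le_mul_of_nonneg_left (hc _) (hy₀ _)
    _ = _ := by rw [h, ← sum_compl_add_sum s (pvTensor y c), add_sub_cancel_right]

open Finset in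
/-- For a strictly positive vector, fewer than all entries sum to strictly less than the total. -/
lemma topSum_lt_sum {ι : Type*} [Fintype ι] [DecidableEq ι] {y : ι → ℝ} (hy : ∀ i, 0 < y i)
    {n : ℕ} (hn : n < Fintype.card ι) : topSum y n < ∑ i, y i := by
  obtain ⟨s, hs, h⟩ := exists_topSum_eq y n
  have hne : sᶜ.Nonempty := by
    rw [← card_pos, card_compl]
    omega
  rw [h, ← sum_compl_add_sum s]
  linarith [sum_pos (fun i _ => hy i) hne]

/-- Zhou–Guo structural constraint: if a catalyst `γ` of dimension `m + 1` with smallest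
entry `γ_{m}` enables the deterministic transformation `x ⊗ γ ≺ y ⊗ γ`, then
`(m + 1) · γ_m ≤ P(x → y)`. -/
theorem catalyst_smallest_entry_bound {d m : ℕ} (x y : Fin (d + 1) → ℝ)
    (γ : Fin (m + 1) → ℝ)
    (hx : IsProbVec x) (hy : IsProbVec y) (hxa : Antitone x) (hya : Antitone y)
    (hxp : ∀ i, 0 < x i) (hyp : ∀ i, 0 < y i)
    (hγ : IsProbVec γ) (hγa : Antitone γ) (hγp : ∀ i, 0 < γ i)
    (h : PMaj (pvTensor x γ) (pvTensor y γ)) :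
    ((m : ℝ) + 1) * γ (Fin.last m) ≤ Pconv x y := by
  refine Finset.le_inf' _ _ fun n hn => ?_
  have hn' : n < d + 1 := by simpa using hn
  rw [le_div_iff₀ (sub_pos.mpr (topSum_lt_sum hyp (by simpa using hn')))]
  have h₁ := card_mul_tail_le_tail_pvTensor hya hy.1 (hγp (Fin.last m)).le
    (fun j => hγa (Fin.le_last j)) hn'
  have h₂ := topSum_le_topSum_pvTensor x hγ.2 n
  have h₃ := h.1 (n * Fintype.card (Fin (m + 1)))
  have h₄ : ∑ p, pvTensor y γ p = ∑ i, x i := by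
    rw [← h.2, Fintype.sum_prod_type]
    simp [pvTensor, ← Finset.mul_sum, hγ.2]
  have h₅ : (Fintype.card (Fin (m + 1)) : ℝ) = m + 1 := by simp
  rw [h₅] at h₁
  linarith
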